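/- Let n ≥ 3 be odd and let L be a representable distributive quasi relation algebra. Then the nested sum S_n[L] of the finite odd Sugihara chain S_n and L is a representable distributive quasi relation algebra; moreover, if L is finitely representable, then S_n[L] is finitely representable. -/

import Mathlib

universe u v

/-- Composition of binary relations. -/
def rcomp {X : Type*} (R S : Set (X × X)) : Set (X × X) :=
  {p | ∃ z, (p.1, z) ∈ R ∧ (z, p.2) ∈ S}

/-- Converse of a binary relation. -/
def rconv {X : Type*} (R : Set (X × X)) : Set (X × X) := {p | (p.2, p.1) ∈ R}

/-- The graph of a function, as a binary relation. -/
def graphRel {X : Type*} (f : X → X) : Set (X × X) := {p | p.2 = f p.1}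

/-- The order relation `≤` as a set of pairs; this is the identity element `1`. -/
def oneRel {X : Type*} (le : X → X → Prop) : Set (X × X) := {p | le p.1 p.2}

/-- Up-sets of `(E, ≼)` where `(u,v) ≼ (x,y)` iff `x ≤ u` and `v ≤ y`. -/
def upSets {X : Type*} (le : X → X → Prop) (E : Set (X × X)) : Set (Set (X × X)) :=
  {R | R ⊆ E ∧ ∀ p ∈ R, ∀ q ∈ E, le q.1 p.1 → le p.2 q.2 → q ∈ R}

/-- `∼R = R^{c⌣} ; α`, complement taken within `E`. -/
def snegRel {X : Type*} (E : Set (X × X)) (a : X → X) (R : Set (X × X)) : Set (X × X) :=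
  rcomp (rconv (E \ R)) (graphRel a)

/-- `−R = α ; R^{c⌣}`, complement taken within `E`. -/
def rnegRel {X : Type*} (E : Set (X × X)) (a : X → X) (R : Set (X × X)) : Set (X × X) :=
  rcomp (graphRel a) (rconv (E \ R))

/-- `¬R = α ; β ; R^c ; β`, complement taken within `E`. -/
def qnegRel {X : Type*} (E : Set (X × X)) (a b : X → X) (R : Set (X × X)) : Set (X × X) :=
  rcomp (graphRel a) (rcomp (graphRel b) (rcomp (E \ R) (graphRel b)))

/-- The constant `0 = α ; (≤^c)⌣`, complement taken within `E`. -/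
def zeroRel {X : Type*} (le : X → X → Prop) (E : Set (X × X)) (a : X → X) : Set (X × X) :=
  rcomp (graphRel a) (rconv (E \ oneRel le))

/-- The data needed to build the algebra `Dq(E)`: a poset `(X, le)`, an
equivalence relation `E ⊇ le`, an order automorphism `a` and a self-inverse
dual order automorphism `b` of the poset whose graphs are contained in `E`
and which satisfy `β = α ; β ; α`. -/
structure RepBase {X : Type} (le : X → X → Prop) (E : Set (X × X)) (a b : X → X) : Prop where
  le_refl : ∀ u, le u u
  le_antisymm : ∀ u v, le u v → le v u → u = v
  le_trans : ∀ u v w, le u v → le v w → le u w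
  equiv : Equivalence fun u v => (u, v) ∈ E
  le_sub : ∀ u v, le u v → (u, v) ∈ E
  a_bij : Function.Bijective a
  a_ord : ∀ u v, le u v ↔ le (a u) (a v)
  b_invol : ∀ u, b (b u) = u
  b_dual : ∀ u v, le u v ↔ le (b v) (b u)
  a_sub : ∀ u, (u, a u) ∈ E
  b_sub : ∀ u, (u, b u) ∈ E
  aba : ∀ u, a (b (a u)) = b u

/-- The map `f` exhibits the subset `S` of `A` (closed under the given qRA
operations) as a subalgebra of the algebra `Dq(E)` of up-sets of `(E, ≼)`
over the poset `(X, le)` with order automorphism `a` and self-inverse dual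
order automorphism `b`; i.e. `f` is an injective qRA homomorphism into
`Dq(E)`. -/
structure IsQRAEmbedding (A : Type u) (S : Set A)
    (inf' sup' mul' : A → A → A) (sneg' rneg' qneg' : A → A) (one' zero' : A)
    {X : Type} (le : X → X → Prop) (E : Set (X × X)) (a b : X → X)
    (f : A → Set (X × X)) : Prop where
  base : RepBase le E a b
  closed_inf : ∀ m ∈ S, ∀ m' ∈ S, inf' m m' ∈ S
  closed_sup : ∀ m ∈ S, ∀ m' ∈ S, sup' m m' ∈ S
  closed_mul : ∀ m ∈ S, ∀ m' ∈ S, mul' m m' ∈ S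
  closed_sneg : ∀ m ∈ S, sneg' m ∈ S
  closed_rneg : ∀ m ∈ S, rneg' m ∈ S
  closed_qneg : ∀ m ∈ S, qneg' m ∈ S
  one_mem : one' ∈ S
  zero_mem : zero' ∈ S
  maps_up : ∀ m ∈ S, f m ∈ upSets le E
  inj : Set.InjOn f S
  map_inf : ∀ m ∈ S, ∀ m' ∈ S, f (inf' m m') = f m ∩ f m'
  map_sup : ∀ m ∈ S, ∀ m' ∈ S, f (sup' m m') = f m ∪ f m'
  map_mul : ∀ m ∈ S, ∀ m' ∈ S, f (mul' m m') = rcomp (f m) (f m')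
  map_sneg : ∀ m ∈ S, f (sneg' m) = snegRel E a (f m)
  map_rneg : ∀ m ∈ S, f (rneg' m) = rnegRel E a (f m)
  map_qneg : ∀ m ∈ S, f (qneg' m) = qnegRel E a b (f m)
  map_one : f one' = oneRel le
  map_zero : f zero' = zeroRel le E a

/-- The algebra carried by the subset `S` of `A` (with the given qRA
operations) is representable: it embeds as a qRA into some `Dq(E)`. -/
def RepresentableOn (A : Type u) (S : Set A)
    (inf' sup' mul' : A → A → A) (sneg' rneg' qneg' : A → A) (one' zero' : A) : Prop :=
  ∃ (X : Type) (le : X → X → Prop) (E : Set (X × X)) (a b : X → X) (f : A → Set (X × X)),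
    IsQRAEmbedding A S inf' sup' mul' sneg' rneg' qneg' one' zero' le E a b f

/-- Finitely representable: representable over a finite poset. -/
def FinRepresentableOn (A : Type u) (S : Set A)
    (inf' sup' mul' : A → A → A) (sneg' rneg' qneg' : A → A) (one' zero' : A) : Prop :=
  ∃ (X : Type) (le : X → X → Prop) (E : Set (X × X)) (a b : X → X) (f : A → Set (X × X)),
    Finite X ∧ IsQRAEmbedding A S inf' sup' mul' sneg' rneg' qneg' one' zero' le E a b f

/-- A quasi relation algebra `⟨A, ∧, ∨, ·, ∼, −, ¬, 1, 0⟩`: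
a lattice, a monoid with `a·b ≤ c ↔ a ≤ −(b·∼c) ↔ b ≤ ∼(−c·a)`,
`0 = ∼1 = −1`, (In): `∼(−a) = a = −(∼a)`, an involution `¬` satisfying
(Dm), (Di) and (Dp) (where `a + b := ∼(−a · −b)`). -/
class QRA (α : Type u) where
  le : α → α → Prop
  inf : α → α → α
  sup : α → α → α
  mul : α → α → α
  sneg : α → α
  rneg : α → α
  qneg : α → α
  one : α
  zero : α
  le_refl : ∀ x, le x x
  le_antisymm : ∀ x y, le x y → le y x → x = y
  le_trans : ∀ x y z, le x y → le y z → le x z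
  inf_le_left : ∀ x y, le (inf x y) x
  inf_le_right : ∀ x y, le (inf x y) y
  le_inf : ∀ x y z, le x y → le x z → le x (inf y z)
  le_sup_left : ∀ x y, le x (sup x y)
  le_sup_right : ∀ x y, le y (sup x y)
  sup_le : ∀ x y z, le x z → le y z → le (sup x y) z
  mul_assoc : ∀ x y z, mul (mul x y) z = mul x (mul y z)
  one_mul : ∀ x, mul one x = x
  mul_one : ∀ x, mul x one = x
  mul_le_left : ∀ x y z, le (mul x y) z ↔ le x (rneg (mul y (sneg z)))
  mul_le_right : ∀ x y z, le (mul x y) z ↔ le y (sneg (mul (rneg z) x))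
  zero_sneg_one : zero = sneg one
  zero_rneg_one : zero = rneg one
  sneg_rneg : ∀ x, sneg (rneg x) = x
  rneg_sneg : ∀ x, rneg (sneg x) = x
  qneg_qneg : ∀ x, qneg (qneg x) = x
  dm : ∀ x y, qneg (sup x y) = inf (qneg x) (qneg y)
  di : ∀ x, qneg (sneg x) = rneg (qneg x)
  dp : ∀ x y, qneg (mul x y) = sneg (mul (rneg (qneg x)) (rneg (qneg y)))

/-- The index set of the finite Sugihara chain `Sₙ` (as a subset of `ℤ`):
for `n = 2k` the indices `-k,…,-1,1,…,k`, and for `n = 2k+1` the indices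
`-k,…,-1,0,1,…,k`. -/
def sugSet (n : ℕ) : Set ℤ := {i : ℤ | 2 * |i| ≤ (n : ℤ) ∧ (Even n → i ≠ 0)}

/-- The index of the monoid identity of `Sₙ`: `a₁` if `n` is even, `a₀` if odd. -/
def sugOneIdx (n : ℕ) : ℤ := if Even n then 1 else 0

/-- Multiplication of the Sugihara chain on indices:
`aᵢ · aⱼ = aᵢ` if `|j| < |i|`, `aⱼ` if `|i| < |j|`, and `a_{min(i,j)}` if `|i| = |j|`. -/
def sugMulIdx (i j : ℤ) : ℤ := if |j| < |i| then i else if |i| < |j| then j else min i j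

variable {L : Type u} [QRA L]

/-- Meet on the nested sum `Sₙ[L]` (ambient carrier `ℤ ⊕ L`; the `K = Sₙ` part
is encoded by Sugihara indices, whose identity has index `0`). -/
def sklInf : ℤ ⊕ L → ℤ ⊕ L → ℤ ⊕ L
  | Sum.inl j, Sum.inl j' => Sum.inl (min j j')
  | Sum.inl j, Sum.inr l => if 0 ≤ j then Sum.inr l else Sum.inl (min j 0)
  | Sum.inr l, Sum.inl j => if 0 ≤ j then Sum.inr l else Sum.inl (min j 0)
  | Sum.inr l, Sum.inr l' => Sum.inr (QRA.inf l l')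

/-- Join on the nested sum `Sₙ[L]`. -/
def sklSup : ℤ ⊕ L → ℤ ⊕ L → ℤ ⊕ L
  | Sum.inl j, Sum.inl j' => Sum.inl (max j j')
  | Sum.inl j, Sum.inr l => if j ≤ 0 then Sum.inr l else Sum.inl (max j 0)
  | Sum.inr l, Sum.inl j => if j ≤ 0 then Sum.inr l else Sum.inl (max j 0)
  | Sum.inr l, Sum.inr l' => Sum.inr (QRA.sup l l')

/-- Multiplication on the nested sum `Sₙ[L]`: across parts the `L`-argument is
replaced by the identity `a₀` (index `0`) of `Sₙ`. -/
def sklMul : ℤ ⊕ L → ℤ ⊕ L → ℤ ⊕ L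
  | Sum.inl j, Sum.inl j' => Sum.inl (sugMulIdx j j')
  | Sum.inl j, Sum.inr _ => Sum.inl (sugMulIdx j 0)
  | Sum.inr _, Sum.inl j' => Sum.inl (sugMulIdx 0 j')
  | Sum.inr l, Sum.inr l' => Sum.inr (QRA.mul l l')

/-- `∼` on the nested sum `Sₙ[L]`, acting componentwise (`∼aⱼ = a₋ⱼ` on `Sₙ`). -/
def sklSneg : ℤ ⊕ L → ℤ ⊕ L
  | Sum.inl j => Sum.inl (-j)
  | Sum.inr l => Sum.inr (QRA.sneg l)

/-- `−` on the nested sum `Sₙ[L]`, acting componentwise. -/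
def sklRneg : ℤ ⊕ L → ℤ ⊕ L
  | Sum.inl j => Sum.inl (-j)
  | Sum.inr l => Sum.inr (QRA.rneg l)

/-- `¬` on the nested sum `Sₙ[L]`, acting componentwise. -/
def sklQneg : ℤ ⊕ L → ℤ ⊕ L
  | Sum.inl j => Sum.inl (-j)
  | Sum.inr l => Sum.inr (QRA.qneg l)

/-- The identity of the nested sum: `1_{Sₙ[L]} = 1_L`. -/
def sklOne : ℤ ⊕ L := Sum.inr QRA.one

/-- The negation constant of the nested sum: `0_{Sₙ[L]} = 0_L`. -/
def sklZero : ℤ ⊕ L := Sum.inr QRA.zero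

/-- The carrier of the nested sum `Sₙ[L]` inside `ℤ ⊕ L`:
`(Sₙ ∖ {a₀}) ∪ L`. -/
def sklCar (n : ℕ) : Set (ℤ ⊕ L) :=
  {x | match x with
       | Sum.inl j => j ∈ sugSet n ∧ j ≠ 0
       | Sum.inr _ => True}

section RelationLemmas

variable {X : Type*} {E R : Set (X × X)} {a b : X → X}

theorem mem_rcomp {R S : Set (X × X)} {u v : X} :
    (u, v) ∈ rcomp R S ↔ ∃ z, (u, z) ∈ R ∧ (z, v) ∈ S := Iff.rfl

theorem mem_snegRel {u v : X} :
    (u, v) ∈ snegRel E a R ↔ ∃ w, ((w, u) ∈ E ∧ (w, u) ∉ R) ∧ v = a w := Iff.rfl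

theorem mem_rnegRel {u v : X} :
    (u, v) ∈ rnegRel E a R ↔ (v, a u) ∈ E ∧ (v, a u) ∉ R := by
  constructor
  · rintro ⟨z, hz, h⟩
    obtain rfl : z = a u := hz
    exact h
  · exact fun h => ⟨a u, rfl, h⟩

theorem mem_qnegRel (hb : ∀ u, b (b u) = u) {u v : X} :
    (u, v) ∈ qnegRel E a b R ↔ (b (a u), b v) ∈ E ∧ (b (a u), b v) ∉ R := by
  constructor
  · rintro ⟨z, hz, w, hw, t, h, ht⟩
    obtain rfl : z = a u := hz
    obtain rfl : w = b (a u) := hw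
    obtain rfl : v = b t := ht
    simpa [hb] using h
  · exact fun h => ⟨a u, rfl, b (a u), rfl, b v, h, (hb v).symm⟩

end RelationLemmas

section Extension

variable {X Q : Type} (c : X → Q)

/-- Over each class `q` of `X`, put a two-element antichain above and another one below it:
a new point `(q, s, i)` lies above the class when `s = true` and below it when `s = false`. -/
abbrev SandwichPoint (X Q : Type) : Type := X ⊕ Q × Bool × Bool

/-- The extension to `SandwichPoint X Q` of a relation on `X`. It agrees with the extended order
outside of `X`. -/
def extRel (R : Set (X × X)) : Set (SandwichPoint X Q × SandwichPoint X Q) :=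
  {p | match p with
       | (Sum.inl x, Sum.inl y) => (x, y) ∈ R
       | (Sum.inl x, Sum.inr (q, s, _)) => c x = q ∧ s = true
       | (Sum.inr (q, s, _), Sum.inl y) => c y = q ∧ s = false
       | (Sum.inr (q, s, i), Sum.inr (q', s', i')) =>
          q = q' ∧ ((s = s' ∧ i = i') ∨ (s = false ∧ s' = true))}

/-- The class of a point of `SandwichPoint X Q`. -/
def extClass : SandwichPoint X Q → Q
  | Sum.inl x => c x
  | Sum.inr (q, _, _) => q

/-- The extended equivalence relation: lying in the same class. -/
def extEquiv : Set (SandwichPoint X Q × SandwichPoint X Q) := {p | extClass c p.1 = extClass c p.2}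

/-- The extended order. -/
def extLe (le : X → X → Prop) (u v : SandwichPoint X Q) : Prop := (u, v) ∈ extRel c (oneRel le)

/-- The extended order automorphism. -/
def extAut (a : X → X) : SandwichPoint X Q → SandwichPoint X Q
  | Sum.inl x => Sum.inl (a x)
  | Sum.inr (q, s, i) => Sum.inr (q, s, !i)

/-- The extended dual order automorphism. -/
def extDual (b : X → X) : SandwichPoint X Q → SandwichPoint X Q
  | Sum.inl x => Sum.inl (b x)
  | Sum.inr (q, s, i) => Sum.inr (q, !s, i)

variable {c} {R S E : Set (X × X)} {le : X → X → Prop} {a b : X → X}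

@[simp] theorem inl_inl_mem_extRel {x y : X} :
    (Sum.inl x, Sum.inl y) ∈ extRel c R ↔ (x, y) ∈ R := Iff.rfl

@[simp] theorem inl_inr_mem_extRel {x : X} {q : Q} {s i : Bool} :
    (Sum.inl x, Sum.inr (q, s, i)) ∈ extRel c R ↔ c x = q ∧ s = true := Iff.rfl

@[simp] theorem inr_inl_mem_extRel {y : X} {q : Q} {s i : Bool} :
    (Sum.inr (q, s, i), Sum.inl y) ∈ extRel c R ↔ c y = q ∧ s = false := Iff.rfl

@[simp] theorem inr_inr_mem_extRel {q q' : Q} {s i s' i' : Bool} :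
    (Sum.inr (q, s, i), Sum.inr (q', s', i')) ∈ extRel c R ↔
      q = q' ∧ ((s = s' ∧ i = i') ∨ (s = false ∧ s' = true)) := Iff.rfl

@[simp] theorem mem_extEquiv {u v : SandwichPoint X Q} :
    (u, v) ∈ extEquiv c ↔ extClass c u = extClass c v := Iff.rfl

@[simp] theorem mem_oneRel {u v : X} : (u, v) ∈ oneRel le ↔ le u v := Iff.rfl

@[simp] theorem extClass_inl (x : X) : extClass c (Sum.inl x) = c x := rfl

@[simp] theorem extClass_inr (q : Q) (i : Bool × Bool) :
    extClass c (Sum.inr (q, i)) = q := rfl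

@[simp] theorem extAut_inl (x : X) : extAut (Q := Q) a (Sum.inl x) = Sum.inl (a x) := rfl

@[simp] theorem extAut_inr (q : Q) (s i : Bool) :
    extAut a (Sum.inr (q, s, i)) = Sum.inr (q, s, !i) := rfl

@[simp] theorem extDual_inl (x : X) : extDual (Q := Q) b (Sum.inl x) = Sum.inl (b x) := rfl

@[simp] theorem extDual_inr (q : Q) (s i : Bool) :
    extDual b (Sum.inr (q, s, i)) = Sum.inr (q, !s, i) := rfl

theorem exists_ext {p : SandwichPoint X Q → Prop} :
    (∃ u, p u) ↔ (∃ x, p (Sum.inl x)) ∨ ∃ q s i, p (Sum.inr (q, s, i)) := by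
  simp [Sum.exists, Prod.exists]

theorem oneRel_extLe : oneRel (extLe c le) = extRel c (oneRel le) := rfl

theorem extRel_subset (hR : ∀ u v, (u, v) ∈ R → c u = c v) : extRel c R ⊆ extEquiv c := by
  rintro ⟨x | ⟨q, s, i⟩, y | ⟨q', s', i'⟩⟩ h
  · exact hR _ _ h
  · exact h.1
  · exact h.1.symm
  · exact h.1

theorem extRel_injective : Function.Injective (extRel c) := by
  intro R S h
  ext ⟨x, y⟩
  exact Set.ext_iff.1 h (Sum.inl x, Sum.inl y)

theorem extRel_ne_empty [hQ : Nonempty Q] : extRel c R ≠ ∅ := by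
  obtain ⟨q⟩ := hQ
  refine Set.Nonempty.ne_empty ⟨(Sum.inr (q, true, true), Sum.inr (q, true, true)), ?_⟩
  simp

theorem extRel_ne_extEquiv [hQ : Nonempty Q] : extRel c R ≠ extEquiv c := by
  obtain ⟨q⟩ := hQ
  intro h
  have : (Sum.inr (q, true, true), Sum.inr (q, false, true)) ∈ extRel c R := by simp [h]
  simp at this

theorem extEquiv_ne_empty [hQ : Nonempty Q] : extEquiv c ≠ ∅ := by
  obtain ⟨q⟩ := hQ
  exact Set.Nonempty.ne_empty ⟨(Sum.inr (q, true, true), Sum.inr (q, true, true)), rfl⟩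

theorem extRel_inter : extRel c (R ∩ S) = extRel c R ∩ extRel c S := by
  ext ⟨x | ⟨q, s, i⟩, y | ⟨q', s', i'⟩⟩ <;> simp

theorem extRel_union : extRel c (R ∪ S) = extRel c R ∪ extRel c S := by
  ext ⟨x | ⟨q, s, i⟩, y | ⟨q', s', i'⟩⟩ <;> simp

theorem extRel_rcomp (hR : ∀ u v, (u, v) ∈ R → c u = c v) (hS : ∀ u v, (u, v) ∈ S → c u = c v) :
    extRel c (rcomp R S) = rcomp (extRel c R) (extRel c S) := by
  ext ⟨x | ⟨q, s, i⟩, y | ⟨q', s', i'⟩⟩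
  · simp only [mem_rcomp, exists_ext, inl_inl_mem_extRel, inl_inr_mem_extRel, inr_inl_mem_extRel]
    grind
  · simp only [mem_rcomp, exists_ext, inl_inl_mem_extRel, inl_inr_mem_extRel, inr_inr_mem_extRel]
    refine ⟨fun h => Or.inr ⟨q', s', i', h, rfl, Or.inl ⟨rfl, rfl⟩⟩, ?_⟩
    grind
  · simp only [mem_rcomp, exists_ext, inl_inl_mem_extRel, inr_inr_mem_extRel, inr_inl_mem_extRel]
    refine ⟨fun h => Or.inr ⟨q, s, i, ⟨rfl, Or.inl ⟨rfl, rfl⟩⟩, h⟩, ?_⟩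
    grind
  · simp only [mem_rcomp, exists_ext, inr_inr_mem_extRel, inl_inr_mem_extRel, inr_inl_mem_extRel]
    cases s <;> cases s' <;> cases i <;> cases i' <;> simp <;> grind

theorem extEquiv_rcomp_extEquiv : rcomp (extEquiv c) (extEquiv c) = extEquiv c := by
  ext ⟨u, v⟩
  simp only [mem_rcomp, mem_extEquiv]
  exact ⟨fun ⟨z, h, h'⟩ => h.trans h', fun h => ⟨u, rfl, h⟩⟩

theorem rcomp_empty : rcomp R ∅ = ∅ := by
  ext ⟨u, v⟩
  simp [mem_rcomp]

theorem empty_rcomp : rcomp ∅ R = ∅ := by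
  ext ⟨u, v⟩
  simp [mem_rcomp]

theorem extEquiv_rcomp_extRel (hR : ∀ u v, (u, v) ∈ R → c u = c v) :
    rcomp (extEquiv c) (extRel c R) = extEquiv c := by
  ext ⟨u, v⟩
  constructor
  · rintro ⟨z, h, h'⟩
    exact Eq.trans h (extRel_subset hR h')
  · intro h
    obtain y | ⟨q, s, i⟩ := v
    · exact ⟨Sum.inr (c y, false, false), h, by simp⟩
    · exact ⟨Sum.inr (q, s, i), h, by simp⟩

theorem extRel_rcomp_extEquiv (hR : ∀ u v, (u, v) ∈ R → c u = c v) :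
    rcomp (extRel c R) (extEquiv c) = extEquiv c := by
  ext ⟨u, v⟩
  constructor
  · rintro ⟨z, h, h'⟩
    exact (mem_extEquiv.1 (extRel_subset hR h)).trans h'
  · intro h
    obtain y | ⟨q, s, i⟩ := u
    · exact ⟨Sum.inr (c y, true, false), by simp, h⟩
    · exact ⟨Sum.inr (q, s, i), by simp, h⟩

theorem RepBase.extend (h : RepBase le E a b) (hc : ∀ u v, (u, v) ∈ E ↔ c u = c v) :
    RepBase (extLe c le) (extEquiv c) (extAut a) (extDual b) := by
  have ca : ∀ u, c (a u) = c u := fun u => ((hc _ _).1 (h.a_sub u)).symm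
  have cb : ∀ u, c (b u) = c u := fun u => ((hc _ _).1 (h.b_sub u)).symm
  have cle : ∀ u v, le u v → c u = c v := fun u v huv => (hc _ _).1 (h.le_sub u v huv)
  have hra := h.le_refl
  have haa := h.le_antisymm
  have hta := h.le_trans
  refine ⟨?_, ?_, ?_, ⟨fun _ => rfl, Eq.symm, Eq.trans⟩, fun u v huv => extRel_subset cle huv,
    ⟨?_, ?_⟩, ?_, ?_, ?_, ?_, ?_, ?_⟩
  · rintro (x | ⟨q, s, i⟩) <;> simp [extLe, h.le_refl]
  · rintro (x | ⟨q, s, i⟩) (y | ⟨q', s', i'⟩) <;> simp [extLe] <;> grind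
  · rintro (x | ⟨q, s, i⟩) (y | ⟨q', s', i'⟩) (z | ⟨q'', s'', i''⟩) <;> simp [extLe] <;> grind
  · rintro (x | ⟨q, s, i⟩) (y | ⟨q', s', i'⟩) <;> simp
    exact fun hxy => h.a_bij.1 hxy
  · rintro (x | ⟨q, s, i⟩)
    · obtain ⟨y, rfl⟩ := h.a_bij.2 x
      exact ⟨Sum.inl y, rfl⟩
    · exact ⟨Sum.inr (q, s, !i), by simp⟩
  · rintro (x | ⟨q, s, i⟩) (y | ⟨q', s', i'⟩) <;> simp [extLe, ca, ← h.a_ord]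
  · rintro (x | ⟨q, s, i⟩) <;> simp [h.b_invol]
  · rintro (x | ⟨q, s, i⟩) (y | ⟨q', s', i'⟩) <;> simp [extLe, cb, ← h.b_dual] <;> grind
  · rintro (x | ⟨q, s, i⟩) <;> simp [ca]
  · rintro (x | ⟨q, s, i⟩) <;> simp [cb]
  · rintro (x | ⟨q, s, i⟩) <;> simp [h.aba]

theorem extRel_mem_upSets (hc : ∀ u v, (u, v) ∈ E ↔ c u = c v)
    (hle : ∀ u v, le u v → (u, v) ∈ E) (hR : R ∈ upSets le E) :
    extRel c R ∈ upSets (extLe c le) (extEquiv c) := by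
  have hRc : ∀ u v, (u, v) ∈ R → c u = c v := fun u v huv => (hc _ _).1 (hR.1 huv)
  have cle : ∀ u v, le u v → c u = c v := fun u v huv => (hc _ _).1 (hle u v huv)
  have hup : ∀ u v x y, (u, v) ∈ R → c x = c y → le x u → le v y → (x, y) ∈ R :=
    fun u v x y huv hxy => hR.2 _ huv (x, y) ((hc _ _).2 hxy)
  refine ⟨extRel_subset hRc, ?_⟩
  rintro ⟨u | ⟨p, s, i⟩, v | ⟨q, t, j⟩⟩ h₁ ⟨u' | ⟨p', s', i'⟩, v' | ⟨q', t', j'⟩⟩ h₂ h₃ h₄ <;>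
    simp [extLe] at h₁ h₂ h₃ h₄ ⊢ <;> grind

theorem extRel_snegRel (hc : ∀ u v, (u, v) ∈ E ↔ c u = c v) (ha : ∀ u, (u, a u) ∈ E)
    (hsurj : Function.Surjective a) :
    extRel c (snegRel E a R) = snegRel (extEquiv c) (extAut a) (extRel c R) := by
  have ca : ∀ u, c (a u) = c u := fun u => ((hc _ _).1 (ha u)).symm
  ext ⟨x | ⟨q, s, i⟩, y | ⟨q', s', i'⟩⟩
  · simp [mem_snegRel, hc]
  · cases s' <;> cases i' <;> simp [mem_snegRel] <;> grind
  · obtain ⟨y, rfl⟩ := hsurj y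
    cases s <;> cases i <;> simp [mem_snegRel] <;> grind
  · cases s <;> cases i <;> cases s' <;> cases i' <;> simp [mem_snegRel] <;> grind

theorem extRel_rnegRel (hc : ∀ u v, (u, v) ∈ E ↔ c u = c v) (ha : ∀ u, (u, a u) ∈ E) :
    extRel c (rnegRel E a R) = rnegRel (extEquiv c) (extAut a) (extRel c R) := by
  have ca : ∀ u, c (a u) = c u := fun u => ((hc _ _).1 (ha u)).symm
  ext ⟨x | ⟨q, s, i⟩, y | ⟨q', s', i'⟩⟩ <;> simp [mem_rnegRel, hc, ca] <;> grind

theorem extRel_qnegRel (hc : ∀ u v, (u, v) ∈ E ↔ c u = c v) (h : RepBase le E a b) :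
    extRel c (qnegRel E a b R) =
      qnegRel (extEquiv c) (extAut a) (extDual b) (extRel c R) := by
  have ca : ∀ u, c (a u) = c u := fun u => ((hc _ _).1 (h.a_sub u)).symm
  have cb : ∀ u, c (b u) = c u := fun u => ((hc _ _).1 (h.b_sub u)).symm
  ext ⟨x | ⟨q, s, i⟩, y | ⟨q', s', i'⟩⟩ <;>
    simp [mem_qnegRel h.b_invol, mem_qnegRel (h.extend hc).b_invol, hc, ca, cb] <;> grind

end Extension

section Bounds

variable {X : Type} {le : X → X → Prop} {E : Set (X × X)} {a b : X → X}

theorem snegRel_self : snegRel E a E = ∅ := by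
  ext ⟨u, v⟩
  simp [mem_snegRel]

theorem rnegRel_self : rnegRel E a E = ∅ := by
  ext ⟨u, v⟩
  simp [mem_rnegRel]

theorem RepBase.qnegRel_self (h : RepBase le E a b) : qnegRel E a b E = ∅ := by
  ext ⟨u, v⟩
  simp [mem_qnegRel h.b_invol]

theorem RepBase.snegRel_empty (h : RepBase le E a b) : snegRel E a ∅ = E := by
  ext ⟨u, v⟩
  obtain ⟨v, rfl⟩ := h.a_bij.2 v
  simp only [mem_snegRel, Set.mem_empty_iff_false, not_false_eq_true, and_true]
  constructor
  · rintro ⟨w, hw, e⟩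
    rw [e]
    exact h.equiv.trans (h.equiv.symm hw) (h.a_sub w)
  · exact fun hv => ⟨v, h.equiv.trans (h.a_sub v) (h.equiv.symm hv), rfl⟩

theorem RepBase.rnegRel_empty (h : RepBase le E a b) : rnegRel E a ∅ = E := by
  ext ⟨u, v⟩
  simp only [mem_rnegRel, Set.mem_empty_iff_false, not_false_eq_true, and_true]
  exact ⟨fun hv => h.equiv.trans (h.a_sub u) (h.equiv.symm hv),
    fun hv => h.equiv.trans (h.equiv.symm hv) (h.a_sub u)⟩

theorem RepBase.qnegRel_empty (h : RepBase le E a b) : qnegRel E a b ∅ = E := by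
  ext ⟨u, v⟩
  simp only [mem_qnegRel h.b_invol, Set.mem_empty_iff_false, not_false_eq_true, and_true]
  have hu : (u, b (a u)) ∈ E := h.equiv.trans (h.a_sub u) (h.b_sub _)
  exact ⟨fun hv => h.equiv.trans (h.equiv.trans hu hv) (h.equiv.symm (h.b_sub v)),
    fun hv => h.equiv.trans (h.equiv.trans (h.equiv.symm hu) hv) (h.b_sub v)⟩

end Bounds

section NestedSum

variable {k : ℕ}

theorem inl_mem_sklCar {M : Type*} {j : ℤ} :
    (Sum.inl j : ℤ ⊕ M) ∈ sklCar (2 * k + 1) ↔ (-(k : ℤ) ≤ j ∧ j ≤ k) ∧ j ≠ 0 := by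
  have : ¬ Even (2 * k + 1) := by simp
  have h : 2 * |j| ≤ ((2 * k + 1 : ℕ) : ℤ) ↔ -(k : ℤ) ≤ j ∧ j ≤ k := by
    rw [← abs_le]
    push_cast
    omega
  simp only [sklCar, sugSet, Set.mem_ofPred_eq, this, false_implies, and_true, h]

theorem inr_mem_sklCar {M : Type*} {n : ℕ} (l : M) : (Sum.inr l : ℤ ⊕ M) ∈ sklCar n := trivial

theorem sklInf_mem {x y : ℤ ⊕ L} (hx : x ∈ sklCar (2 * k + 1)) (hy : y ∈ sklCar (2 * k + 1)) :
    sklInf x y ∈ sklCar (2 * k + 1) := by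
  obtain i | l := x <;> obtain j | m := y <;>
    simp only [sklInf, inl_mem_sklCar, inr_mem_sklCar] at * <;> try split_ifs
  all_goals first | trivial | (rw [inl_mem_sklCar]; omega) | omega

theorem sklSup_mem {x y : ℤ ⊕ L} (hx : x ∈ sklCar (2 * k + 1)) (hy : y ∈ sklCar (2 * k + 1)) :
    sklSup x y ∈ sklCar (2 * k + 1) := by
  obtain i | l := x <;> obtain j | m := y <;>
    simp only [sklSup, inl_mem_sklCar, inr_mem_sklCar] at * <;> try split_ifs
  all_goals first | trivial | (rw [inl_mem_sklCar]; omega) | omega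

theorem sugMulIdx_zero_right (j : ℤ) : sugMulIdx j 0 = j := by
  by_cases hj : j = 0 <;> simp [sugMulIdx, hj]

theorem sugMulIdx_zero_left (j : ℤ) : sugMulIdx 0 j = j := by
  by_cases hj : j = 0 <;> simp [sugMulIdx, hj]

theorem sugMulIdx_eq_or (i j : ℤ) : sugMulIdx i j = i ∨ sugMulIdx i j = j := by
  unfold sugMulIdx
  split_ifs
  · exact Or.inl rfl
  · exact Or.inr rfl
  · exact min_choice i j

theorem sugMulIdx_of_lt {i j : ℤ} (h : |j| < |i|) : sugMulIdx i j = i := if_pos h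

theorem sugMulIdx_of_lt' {i j : ℤ} (h : |i| < |j|) : sugMulIdx i j = j := by
  rw [sugMulIdx, if_neg h.not_gt, if_pos h]

theorem sugMulIdx_of_le {i j : ℤ} (h : |j| ≤ -i) : sugMulIdx i j = i := by
  have hi : |i| = -i := abs_of_nonpos (by linarith [abs_nonneg j])
  obtain h' | h' := (hi ▸ h).lt_or_eq
  · exact sugMulIdx_of_lt h'
  · have := neg_abs_le j
    simp only [sugMulIdx, h', lt_irrefl, if_false]
    omega

theorem sugMulIdx_of_le' {i j : ℤ} (h : |i| ≤ -j) : sugMulIdx i j = j := by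
  have hj : |j| = -j := abs_of_nonpos (by linarith [abs_nonneg i])
  obtain h' | h' := (hj ▸ h).lt_or_eq
  · exact sugMulIdx_of_lt' h'
  · have := neg_abs_le i
    simp only [sugMulIdx, h', lt_irrefl, if_false]
    omega

theorem sklMul_mem {x y : ℤ ⊕ L} (hx : x ∈ sklCar (2 * k + 1)) (hy : y ∈ sklCar (2 * k + 1)) :
    sklMul x y ∈ sklCar (2 * k + 1) := by
  obtain i | l := x <;> obtain j | m := y
  · obtain h | h := sugMulIdx_eq_or i j <;> simpa only [sklMul, h]
  · simpa only [sklMul, sugMulIdx_zero_right]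
  · simpa only [sklMul, sugMulIdx_zero_left]
  · exact inr_mem_sklCar _

theorem sklSneg_mem {x : ℤ ⊕ L} (hx : x ∈ sklCar (2 * k + 1)) :
    sklSneg x ∈ sklCar (2 * k + 1) := by
  obtain i | l := x
  · simp only [sklSneg, inl_mem_sklCar] at *
    omega
  · exact inr_mem_sklCar _

theorem sklRneg_mem {x : ℤ ⊕ L} (hx : x ∈ sklCar (2 * k + 1)) :
    sklRneg x ∈ sklCar (2 * k + 1) := by
  obtain i | l := x
  · simp only [sklRneg, inl_mem_sklCar] at *
    omega
  · exact inr_mem_sklCar _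

theorem sklQneg_mem {x : ℤ ⊕ L} (hx : x ∈ sklCar (2 * k + 1)) :
    sklQneg x ∈ sklCar (2 * k + 1) := by
  obtain i | l := x
  · simp only [sklQneg, inl_mem_sklCar] at *
    omega
  · exact inr_mem_sklCar _

theorem mem_sklCar_succ {M : Type*} {x : ℤ ⊕ M} : x ∈ sklCar (2 * (k + 1) + 1) ↔
    x ∈ sklCar (2 * k + 1) ∨ x = Sum.inl ((k : ℤ) + 1) ∨ x = Sum.inl (-((k : ℤ) + 1)) := by
  obtain i | l := x
  · simp only [inl_mem_sklCar, Sum.inl.injEq]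
    push_cast
    omega
  · simp [inr_mem_sklCar]

/-- `IsQRAEmbedding` for the nested sum with `2 * k + 1` Sugihara indices. -/
abbrev NestedSumEmbedding (L : Type u) [QRA L] (k : ℕ) {X : Type} (le : X → X → Prop)
    (E : Set (X × X)) (a b : X → X) (f : ℤ ⊕ L → Set (X × X)) : Prop :=
  IsQRAEmbedding (ℤ ⊕ L) (sklCar (2 * k + 1)) sklInf sklSup sklMul sklSneg sklRneg sklQneg
    sklOne sklZero le E a b f

theorem IsQRAEmbedding.nestedSum_zero {X : Type} {le : X → X → Prop} {E : Set (X × X)}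
    {a b : X → X} {f : L → Set (X × X)}
    (h : IsQRAEmbedding L Set.univ QRA.inf QRA.sup QRA.mul QRA.sneg QRA.rneg QRA.qneg
      QRA.one QRA.zero le E a b f) :
    NestedSumEmbedding L 0 le E a b (Sum.elim (fun _ => ∅) f) := by
  have hcar : ∀ x ∈ sklCar (L := L) (2 * 0 + 1), ∃ l, x = Sum.inr l := by
    rintro (i | l) hx
    · rw [inl_mem_sklCar] at hx
      omega
    · exact ⟨l, rfl⟩
  refine
    { base := h.base
      closed_inf := fun _ hx _ hy => sklInf_mem hx hy
      closed_sup := fun _ hx _ hy => sklSup_mem hx hy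
      closed_mul := fun _ hx _ hy => sklMul_mem hx hy
      closed_sneg := fun _ hx => sklSneg_mem hx
      closed_rneg := fun _ hx => sklRneg_mem hx
      closed_qneg := fun _ hx => sklQneg_mem hx
      one_mem := inr_mem_sklCar _
      zero_mem := inr_mem_sklCar _
      maps_up := ?_
      inj := ?_
      map_inf := ?_
      map_sup := ?_
      map_mul := ?_
      map_sneg := ?_
      map_rneg := ?_
      map_qneg := ?_
      map_one := h.map_one
      map_zero := h.map_zero }
  · intro x hx
    obtain ⟨l, rfl⟩ := hcar x hx
    exact h.maps_up l trivial
  · intro x hx y hy hxy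
    obtain ⟨l, rfl⟩ := hcar x hx
    obtain ⟨m, rfl⟩ := hcar y hy
    exact congrArg _ (h.inj trivial trivial hxy)
  · intro x hx y hy
    obtain ⟨l, rfl⟩ := hcar x hx
    obtain ⟨m, rfl⟩ := hcar y hy
    exact h.map_inf l trivial m trivial
  · intro x hx y hy
    obtain ⟨l, rfl⟩ := hcar x hx
    obtain ⟨m, rfl⟩ := hcar y hy
    exact h.map_sup l trivial m trivial
  · intro x hx y hy
    obtain ⟨l, rfl⟩ := hcar x hx
    obtain ⟨m, rfl⟩ := hcar y hy
    exact h.map_mul l trivial m trivial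
  · intro x hx
    obtain ⟨l, rfl⟩ := hcar x hx
    exact h.map_sneg l trivial
  · intro x hx
    obtain ⟨l, rfl⟩ := hcar x hx
    exact h.map_rneg l trivial
  · intro x hx
    obtain ⟨l, rfl⟩ := hcar x hx
    exact h.map_qneg l trivial

section Absorption

variable {x : ℤ ⊕ L}

theorem sklInf_top_left (hx : x ∈ sklCar (2 * (k + 1) + 1)) :
    sklInf (Sum.inl ((k : ℤ) + 1)) x = x := by
  obtain j | l := x <;> simp only [inl_mem_sklCar, inr_mem_sklCar] at hx <;>
    simp [sklInf] <;> omega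

theorem sklInf_top_right (hx : x ∈ sklCar (2 * (k + 1) + 1)) :
    sklInf x (Sum.inl ((k : ℤ) + 1)) = x := by
  obtain j | l := x <;> simp only [inl_mem_sklCar, inr_mem_sklCar] at hx <;>
    simp [sklInf] <;> omega

theorem sklInf_bot_left (hx : x ∈ sklCar (2 * (k + 1) + 1)) :
    sklInf (Sum.inl (-((k : ℤ) + 1))) x = Sum.inl (-((k : ℤ) + 1)) := by
  obtain j | l := x <;> simp only [inl_mem_sklCar, inr_mem_sklCar] at hx <;>
    simp [sklInf] <;> grind

theorem sklInf_bot_right (hx : x ∈ sklCar (2 * (k + 1) + 1)) :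
    sklInf x (Sum.inl (-((k : ℤ) + 1))) = Sum.inl (-((k : ℤ) + 1)) := by
  obtain j | l := x <;> simp only [inl_mem_sklCar, inr_mem_sklCar] at hx <;>
    simp [sklInf] <;> grind

theorem sklSup_top_left (hx : x ∈ sklCar (2 * (k + 1) + 1)) :
    sklSup (Sum.inl ((k : ℤ) + 1)) x = Sum.inl ((k : ℤ) + 1) := by
  obtain j | l := x <;> simp only [inl_mem_sklCar, inr_mem_sklCar] at hx <;>
    simp [sklSup] <;> grind

theorem sklSup_top_right (hx : x ∈ sklCar (2 * (k + 1) + 1)) :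
    sklSup x (Sum.inl ((k : ℤ) + 1)) = Sum.inl ((k : ℤ) + 1) := by
  obtain j | l := x <;> simp only [inl_mem_sklCar, inr_mem_sklCar] at hx <;>
    simp [sklSup] <;> grind

theorem sklSup_bot_left (hx : x ∈ sklCar (2 * (k + 1) + 1)) :
    sklSup (Sum.inl (-((k : ℤ) + 1))) x = x := by
  obtain j | l := x <;> simp only [inl_mem_sklCar, inr_mem_sklCar] at hx <;>
    simp [sklSup] <;> grind

theorem sklSup_bot_right (hx : x ∈ sklCar (2 * (k + 1) + 1)) :
    sklSup x (Sum.inl (-((k : ℤ) + 1))) = x := by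
  obtain j | l := x <;> simp only [inl_mem_sklCar, inr_mem_sklCar] at hx <;>
    simp [sklSup] <;> grind

theorem sklMul_top_left (hx : x ∈ sklCar (2 * k + 1)) :
    sklMul (Sum.inl ((k : ℤ) + 1)) x = Sum.inl ((k : ℤ) + 1) := by
  obtain j | l := x
  · have hj : |j| ≤ k := abs_le.2 (inl_mem_sklCar.1 hx).1
    exact congrArg Sum.inl (sugMulIdx_of_lt (by rw [abs_of_nonneg (a := (k : ℤ) + 1)] <;> omega))
  · exact congrArg Sum.inl (sugMulIdx_zero_right _)

theorem sklMul_top_right (hx : x ∈ sklCar (2 * k + 1)) :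
    sklMul x (Sum.inl ((k : ℤ) + 1)) = Sum.inl ((k : ℤ) + 1) := by
  obtain j | l := x
  · have hj : |j| ≤ k := abs_le.2 (inl_mem_sklCar.1 hx).1
    exact congrArg Sum.inl (sugMulIdx_of_lt' (by rw [abs_of_nonneg (a := (k : ℤ) + 1)] <;> omega))
  · exact congrArg Sum.inl (sugMulIdx_zero_left _)

theorem sklMul_top_top :
    sklMul (Sum.inl ((k : ℤ) + 1)) (Sum.inl ((k : ℤ) + 1)) =
      (Sum.inl ((k : ℤ) + 1) : ℤ ⊕ L) := by
  simp [sklMul, sugMulIdx]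

theorem sklMul_bot_left (hx : x ∈ sklCar (2 * (k + 1) + 1)) :
    sklMul (Sum.inl (-((k : ℤ) + 1))) x = Sum.inl (-((k : ℤ) + 1)) := by
  obtain j | l := x
  · have hj := abs_le.2 (inl_mem_sklCar.1 hx).1
    push_cast at hj
    exact congrArg Sum.inl (sugMulIdx_of_le (by rwa [neg_neg]))
  · exact congrArg Sum.inl (sugMulIdx_zero_right _)

theorem sklMul_bot_right (hx : x ∈ sklCar (2 * (k + 1) + 1)) :
    sklMul x (Sum.inl (-((k : ℤ) + 1))) = Sum.inl (-((k : ℤ) + 1)) := by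
  obtain j | l := x
  · have hj := abs_le.2 (inl_mem_sklCar.1 hx).1
    push_cast at hj
    exact congrArg Sum.inl (sugMulIdx_of_le' (by rwa [neg_neg]))
  · exact congrArg Sum.inl (sugMulIdx_zero_left _)

end Absorption

open scoped Classical in
/-- Extend a map on the nested sum with `2 * k + 1` Sugihara indices by sending the new top and
bottom elements to the full and the empty relation. -/
noncomputable def extMap {M : Type*} {X Q : Type} (c : X → Q) (k : ℕ)
    (f : ℤ ⊕ M → Set (X × X)) (x : ℤ ⊕ M) : Set (SandwichPoint X Q × SandwichPoint X Q) :=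
  if x = Sum.inl ((k : ℤ) + 1) then extEquiv c
  else if x = Sum.inl (-((k : ℤ) + 1)) then ∅
  else extRel c (f x)

section ExtMap

variable {X Q : Type} {c : X → Q} {f : ℤ ⊕ L → Set (X × X)}

theorem extMap_top {M : Type*} {f : ℤ ⊕ M → Set (X × X)} :
    extMap c k f (Sum.inl ((k : ℤ) + 1)) = extEquiv c := if_pos rfl

theorem extMap_bot {M : Type*} {f : ℤ ⊕ M → Set (X × X)} :
    extMap c k f (Sum.inl (-((k : ℤ) + 1))) = ∅ := by
  have : -((k : ℤ) + 1) ≠ (k : ℤ) + 1 := by omega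
  simp only [extMap, Sum.inl.injEq, this, if_false, if_true]

theorem extMap_of_mem {M : Type*} {f : ℤ ⊕ M → Set (X × X)} {x : ℤ ⊕ M}
    (hx : x ∈ sklCar (2 * k + 1)) :
    extMap c k f x = extRel c (f x) := by
  have h₁ : x ≠ Sum.inl ((k : ℤ) + 1) := by
    rintro rfl
    rw [inl_mem_sklCar] at hx
    omega
  have h₂ : x ≠ Sum.inl (-((k : ℤ) + 1)) := by
    rintro rfl
    rw [inl_mem_sklCar] at hx
    omega
  simp only [extMap, h₁, h₂, if_false]

theorem NestedSumEmbedding.extend [Nonempty Q] {le : X → X → Prop} {E : Set (X × X)} {a b : X → X}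
    (h : NestedSumEmbedding L k le E a b f) (hc : ∀ u v, (u, v) ∈ E ↔ c u = c v) :
    NestedSumEmbedding L (k + 1) (extLe c le) (extEquiv c) (extAut a) (extDual b)
      (extMap c k f) := by
  have hb := h.base.extend hc
  have hf : ∀ x ∈ sklCar (2 * k + 1), ∀ u v, (u, v) ∈ f x → c u = c v :=
    fun x hx u v huv => (hc u v).1 ((h.maps_up x hx).1 huv)
  have hsub : ∀ x ∈ sklCar (2 * k + 1), extRel c (f x) ⊆ extEquiv c :=
    fun x hx => extRel_subset (hf x hx)
  have hup : ∀ x ∈ sklCar (2 * (k + 1) + 1),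
      extMap c k f x ∈ upSets (extLe c le) (extEquiv c) := by
    intro x hx
    obtain hx | rfl | rfl := mem_sklCar_succ.1 hx
    · rw [extMap_of_mem hx]
      exact extRel_mem_upSets hc h.base.le_sub (h.maps_up x hx)
    · rw [extMap_top]
      exact ⟨subset_rfl, fun _ _ q hq _ _ => hq⟩
    · rw [extMap_bot]
      exact ⟨Set.empty_subset _, fun _ hp => hp.elim⟩
  refine
    { base := hb
      closed_inf := fun _ hx _ hy => sklInf_mem hx hy
      closed_sup := fun _ hx _ hy => sklSup_mem hx hy
      closed_mul := fun _ hx _ hy => sklMul_mem hx hy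
      closed_sneg := fun _ hx => sklSneg_mem hx
      closed_rneg := fun _ hx => sklRneg_mem hx
      closed_qneg := fun _ hx => sklQneg_mem hx
      one_mem := inr_mem_sklCar _
      zero_mem := inr_mem_sklCar _
      maps_up := hup
      inj := ?_
      map_inf := ?_
      map_sup := ?_
      map_mul := ?_
      map_sneg := ?_
      map_rneg := ?_
      map_qneg := ?_
      map_one := ?_
      map_zero := ?_ }
  · intro x hx y hy hxy
    obtain hx | rfl | rfl := mem_sklCar_succ.1 hx <;>
    obtain hy | rfl | rfl := mem_sklCar_succ.1 hy <;>
    try simp only [extMap_top, extMap_bot] at hxy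
    all_goals try rw [extMap_of_mem hx] at hxy
    all_goals try rw [extMap_of_mem hy] at hxy
    · exact h.inj hx hy (extRel_injective hxy)
    · exact (extRel_ne_extEquiv hxy).elim
    · exact (extRel_ne_empty hxy).elim
    · exact (extRel_ne_extEquiv hxy.symm).elim
    · rfl
    · exact (extEquiv_ne_empty hxy).elim
    · exact (extRel_ne_empty hxy.symm).elim
    · exact (extEquiv_ne_empty hxy.symm).elim
    · rfl
  · intro x hx y hy
    obtain hx' | rfl | rfl := mem_sklCar_succ.1 hx
    · obtain hy' | rfl | rfl := mem_sklCar_succ.1 hy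
      · rw [extMap_of_mem hx', extMap_of_mem hy', extMap_of_mem (h.closed_inf x hx' y hy'),
          h.map_inf x hx' y hy', extRel_inter]
      · rw [sklInf_top_right hx, extMap_top, Set.inter_eq_left.2 (hup x hx).1]
      · rw [sklInf_bot_right hx, extMap_bot, Set.inter_empty]
    · rw [sklInf_top_left hy, extMap_top, Set.inter_eq_right.2 (hup y hy).1]
    · rw [sklInf_bot_left hy, extMap_bot, Set.empty_inter]
  · intro x hx y hy
    obtain hx' | rfl | rfl := mem_sklCar_succ.1 hx
    · obtain hy' | rfl | rfl := mem_sklCar_succ.1 hy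
      · rw [extMap_of_mem hx', extMap_of_mem hy', extMap_of_mem (h.closed_sup x hx' y hy'),
          h.map_sup x hx' y hy', extRel_union]
      · rw [sklSup_top_right hx, extMap_top, Set.union_eq_right.2 (hup x hx).1]
      · rw [sklSup_bot_right hx, extMap_bot, Set.union_empty]
    · rw [sklSup_top_left hy, extMap_top, Set.union_eq_left.2 (hup y hy).1]
    · rw [sklSup_bot_left hy, extMap_bot, Set.empty_union]
  · intro x hx y hy
    obtain hx' | rfl | rfl := mem_sklCar_succ.1 hx
    · obtain hy' | rfl | rfl := mem_sklCar_succ.1 hy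
      · rw [extMap_of_mem hx', extMap_of_mem hy', extMap_of_mem (h.closed_mul x hx' y hy'),
          h.map_mul x hx' y hy', extRel_rcomp (hf x hx') (hf y hy')]
      · rw [sklMul_top_right hx', extMap_top, extMap_of_mem hx',
          extRel_rcomp_extEquiv (hf x hx')]
      · rw [sklMul_bot_right hx, extMap_bot, rcomp_empty]
    · obtain hy' | rfl | rfl := mem_sklCar_succ.1 hy
      · rw [sklMul_top_left hy', extMap_top, extMap_of_mem hy',
          extEquiv_rcomp_extRel (hf y hy')]
      · rw [sklMul_top_top, extMap_top, extEquiv_rcomp_extEquiv]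
      · rw [sklMul_bot_right hx, extMap_bot, rcomp_empty]
    · rw [sklMul_bot_left hy, extMap_bot, empty_rcomp]
  · intro x hx
    obtain hx | rfl | rfl := mem_sklCar_succ.1 hx
    · rw [extMap_of_mem hx, extMap_of_mem (h.closed_sneg x hx), h.map_sneg x hx,
        extRel_snegRel hc h.base.a_sub h.base.a_bij.2]
    · rw [sklSneg, extMap_bot, extMap_top, snegRel_self]
    · rw [sklSneg, neg_neg, extMap_bot, extMap_top, hb.snegRel_empty]
  · intro x hx
    obtain hx | rfl | rfl := mem_sklCar_succ.1 hx
    · rw [extMap_of_mem hx, extMap_of_mem (h.closed_rneg x hx), h.map_rneg x hx,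
        extRel_rnegRel hc h.base.a_sub]
    · rw [sklRneg, extMap_bot, extMap_top, rnegRel_self]
    · rw [sklRneg, neg_neg, extMap_bot, extMap_top, hb.rnegRel_empty]
  · intro x hx
    obtain hx | rfl | rfl := mem_sklCar_succ.1 hx
    · rw [extMap_of_mem hx, extMap_of_mem (h.closed_qneg x hx), h.map_qneg x hx,
        extRel_qnegRel hc h.base]
    · rw [sklQneg, extMap_bot, extMap_top, hb.qnegRel_self]
    · rw [sklQneg, neg_neg, extMap_bot, extMap_top, hb.qnegRel_empty]
  · rw [extMap_of_mem h.one_mem, h.map_one, oneRel_extLe]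
  · rw [extMap_of_mem h.zero_mem, h.map_zero]
    exact extRel_rnegRel hc h.base.a_sub

end ExtMap

theorem exists_nestedSumEmbedding {X : Type} {le : X → X → Prop} {E : Set (X × X)}
    {a b : X → X} {f : L → Set (X × X)}
    (h : IsQRAEmbedding L Set.univ QRA.inf QRA.sup QRA.mul QRA.sneg QRA.rneg QRA.qneg
      QRA.one QRA.zero le E a b f) (k : ℕ) :
    ∃ (Y : Type) (le' : Y → Y → Prop) (E' : Set (Y × Y)) (a' b' : Y → Y)
      (g : ℤ ⊕ L → Set (Y × Y)),
      (Finite X → Finite Y) ∧ NestedSumEmbedding L k le' E' a' b' g := by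
  induction k with
  | zero => exact ⟨X, le, E, a, b, _, id, h.nestedSum_zero⟩
  | succ k ih =>
    obtain ⟨Y, le', E', a', b', g, hfin, hg⟩ := ih
    let r : Setoid Y := ⟨_, hg.base.equiv⟩
    -- the extra class keeps the extension nonempty when `Y` is empty
    let c : Y → Option (Quotient r) := fun y => some (Quotient.mk r y)
    have hc : ∀ u v, (u, v) ∈ E' ↔ c u = c v := fun u v =>
      (Quotient.eq (r := r)).symm.trans (Option.some_inj).symm
    refine ⟨_, _, _, _, _, _, fun hX => ?_, hg.extend hc⟩
    have := hfin hX
    infer_instance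

theorem IsQRAEmbedding.inf_sup_distrib {A : Type u} {S : Set A} {inf' sup' mul' : A → A → A}
    {sneg' rneg' qneg' : A → A} {one' zero' : A} {X : Type} {le : X → X → Prop}
    {E : Set (X × X)} {a b : X → X} {f : A → Set (X × X)}
    (h : IsQRAEmbedding A S inf' sup' mul' sneg' rneg' qneg' one' zero' le E a b f)
    {x y z : A} (hx : x ∈ S) (hy : y ∈ S) (hz : z ∈ S) :
    inf' x (sup' y z) = sup' (inf' x y) (inf' x z) := by
  have hyz := h.closed_sup y hy z hz
  have hxy := h.closed_inf x hx y hy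
  have hxz := h.closed_inf x hx z hz
  apply h.inj (h.closed_inf x hx _ hyz) (h.closed_sup _ hxy _ hxz)
  rw [h.map_inf x hx _ hyz, h.map_sup y hy z hz, h.map_sup _ hxy _ hxz, h.map_inf x hx y hy,
    h.map_inf x hx z hz, Set.inter_union_distrib_left]

end NestedSum

/-- Let `n ≥ 3` be odd and let `L` be a (finitely)
representable distributive quasi relation algebra.  Then the nested sum
`Sₙ[L]` of the finite odd Sugihara chain `Sₙ` and `L` is a (finitely)
representable distributive quasi relation algebra. -/
theorem Sn_nestedSum_representable (n : ℕ) (hn : 3 ≤ n) (hodd : Odd n)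
    {L : Type u} [QRA L]
    (hdistL : ∀ x y z : L, QRA.inf x (QRA.sup y z) = QRA.sup (QRA.inf x y) (QRA.inf x z))
    (hrep : RepresentableOn L Set.univ QRA.inf QRA.sup QRA.mul QRA.sneg QRA.rneg QRA.qneg
      QRA.one QRA.zero) :
    (∀ x ∈ sklCar (L := L) n, ∀ y ∈ sklCar (L := L) n, ∀ z ∈ sklCar (L := L) n,
      sklInf x (sklSup y z) = sklSup (sklInf x y) (sklInf x z)) ∧
    RepresentableOn (ℤ ⊕ L) (sklCar n) sklInf sklSup sklMul sklSneg sklRneg sklQneg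
      sklOne sklZero ∧
    (FinRepresentableOn L Set.univ QRA.inf QRA.sup QRA.mul QRA.sneg QRA.rneg QRA.qneg
        QRA.one QRA.zero →
      FinRepresentableOn (ℤ ⊕ L) (sklCar n) sklInf sklSup sklMul sklSneg sklRneg sklQneg
        sklOne sklZero) := by
  obtain ⟨k, rfl⟩ := hodd
  refine ⟨?_, ?_, ?_⟩
  · obtain ⟨X, le, E, a, b, f, h⟩ := hrep
    obtain ⟨Y, le', E', a', b', g, -, hg⟩ := exists_nestedSumEmbedding h k
    exact fun x hx y hy z hz => hg.inf_sup_distrib hx hy hz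
  · obtain ⟨X, le, E, a, b, f, h⟩ := hrep
    obtain ⟨Y, le', E', a', b', g, -, hg⟩ := exists_nestedSumEmbedding h k
    exact ⟨Y, le', E', a', b', g, hg⟩
  · rintro ⟨X, le, E, a, b, f, hX, h⟩
    obtain ⟨Y, le', E', a', b', g, hY, hg⟩ := exists_nestedSumEmbedding h k
    exact ⟨Y, le', E', a', b', g, hY hX, hg⟩
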